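/- The weight function w₅(λ,x) = ((1+λ)^x − 1)/(λx) is strictly totally positive of order infinity on (0,∞)²: for every r ≥ 1 and all λ₁ > λ₂ > ⋯ > λ_r > 0 and x₁ > x₂ > ⋯ > x_r > 0, the r×r determinant det( (w₅(λ_i,x_j))_{i,j=1}^r ) is strictly positive. -/

import Mathlib

/-!
If the determinants `det (fᵢ'(tⱼ))` are positive for increasing `t`, then the mean value theorem,
applied one column at a time, makes `det (fᵢ(xⱼ₊₁) - fᵢ(xⱼ))` positive for increasing `x`, and
column operations turn these consecutive differences into the differences `fᵢ(xⱼ₊₁) - fᵢ(x₀)`.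
By induction the functions `exp (aᵢ u)` with increasing `aᵢ` have positive determinants: after
division by `exp (a₀ u)` the first one is constant, and the others have derivatives that are
positive multiples of exponentials. One more application, with `x₀ = 0`, handles `exp (aᵢ u) - 1`.
The weight `w₅` is this with `aᵢ = log (1 + λᵢ)`, up to positive factors in rows and columns.
-/

open Set Matrix

section Determinants

variable {R : Type*} [CommRing R] {n : ℕ}

theorem det_succ_sub_castSucc_eq_det_succ_sub_zero (A : Matrix (Fin n) (Fin (n + 1)) R) :
    (of fun i j : Fin n => A i j.succ - A i j.castSucc).det =
      (of fun i j : Fin n => A i j.succ - A i 0).det := by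
  cases n with
  | zero => simp only [det_isEmpty]
  | succ n => exact (det_eq_of_forall_col_eq_smul_add_pred (fun _ => 1) (by simp) (by simp)).symm

theorem det_eq_det_succ_sub_zero_of_row_zero_eq_one {A : Matrix (Fin (n + 1)) (Fin (n + 1)) R}
    (hA : ∀ j, A 0 j = 1) : A.det = (of fun i j : Fin n => A i.succ j.succ - A i.succ 0).det := by
  let B : Matrix (Fin (n + 1)) (Fin (n + 1)) R :=
    of fun i => Fin.cons (A i 0) fun j => A i j.succ - A i 0
  have det_eq : A.det = B.det := by
    rw [← det_transpose A, ← det_transpose B]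
    refine det_eq_of_forall_row_eq_smul_add_const (Fin.cons 0 1) 0 rfl fun j i => ?_
    cases j using Fin.cases <;> simp [B]
  have B_zero_zero : B 0 0 = 1 := hA 0
  have B_zero_succ (j : Fin n) : B 0 j.succ = 0 := by simp [B, hA]
  have det_expansion : B.det = (B.submatrix Fin.succ Fin.succ).det := by
    rw [det_succ_row_zero, Fin.sum_univ_succ]
    simp [B_zero_zero, B_zero_succ]
  exact det_eq.trans det_expansion

end Determinants

theorem strictMono_of_forall_mem_Ioo {α : Type*} [Preorder α] {n : ℕ} {x : Fin (n + 1) → α}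
    (hx : Monotone x) {t : Fin n → α} (ht : ∀ j, t j ∈ Ioo (x j.castSucc) (x j.succ)) :
    StrictMono t := fun i j hij =>
  calc t i < x i.succ := (ht i).2
    _ ≤ x j.castSucc := hx (Fin.succ_le_castSucc_iff.2 hij)
    _ < t j := (ht j).1

theorem exists_det_updateCol_eq_slope {ι : Type*} [Fintype ι] [DecidableEq ι] (M : Matrix ι ι ℝ)
    (c : ι) {f f' : ι → ℝ → ℝ} {a b : ℝ} (hab : a < b) (hf : ∀ i, ContinuousOn (f i) (Icc a b))
    (hf' : ∀ i, ∀ u ∈ Ioo a b, HasDerivAt (f i) (f' i u) u) :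
    ∃ u ∈ Ioo a b, (M.updateCol c fun i => f' i u).det =
      (M.updateCol c fun i => f i b - f i a).det / (b - a) := by
  let L : (ι → ℝ) →L[ℝ] ℝ := (LinearMap.proj c ∘ₗ M.cramer).toContinuousLinearMap
  have L_apply (v : ι → ℝ) : L v = (M.updateCol c v).det := rfl
  obtain ⟨u, hu, slope⟩ := exists_hasDerivAt_eq_slope (fun u => L fun i => f i u)
    (fun u => L fun i => f' i u) hab (L.continuous.comp_continuousOn (continuousOn_pi.2 hf))
    fun u hu => L.hasFDerivAt.comp_hasDerivAt u (hasDerivAt_pi.2 fun i => hf' i u hu)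
  refine ⟨u, hu, ?_⟩
  rw [← L_apply, ← L_apply, slope, ← map_sub]
  rfl

/-- A Chebyshev system, normalised to have positive determinants: the functions `f 0, …, f (n - 1)`
have a positive collocation determinant `det (fᵢ(xⱼ))` at all increasing points `xⱼ` of `s`.
No continuity is required. -/
def IsPosChebyshevSystemOn {α R : Type*} [Preorder α] [CommRing R] [LT R] {n : ℕ}
    (f : Fin n → α → R) (s : Set α) : Prop :=
  ∀ ⦃x : Fin n → α⦄, StrictMono x → (∀ j, x j ∈ s) → 0 < (of fun i j => f i (x j)).det

namespace IsPosChebyshevSystemOn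

section Algebra

variable {α R : Type*} [Preorder α] [CommRing R] {n : ℕ} {f : Fin n → α → R} {s : Set α}

theorem const_mul [PartialOrder R] [IsStrictOrderedRing R] (hf : IsPosChebyshevSystemOn f s)
    {c : Fin n → R} (hc : ∀ i, 0 < c i) : IsPosChebyshevSystemOn (fun i u => c i * f i u) s := by
  intro x hx hxs
  exact (mul_pos (Finset.prod_pos fun i _ => hc i) (hf hx hxs)).trans_eq (det_mul_column c _).symm

theorem weight_mul [PartialOrder R] [IsStrictOrderedRing R] (hf : IsPosChebyshevSystemOn f s)
    {g : α → R} (hg : ∀ u ∈ s, 0 < g u) : IsPosChebyshevSystemOn (fun i u => g u * f i u) s := by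
  intro x hx hxs
  exact (mul_pos (Finset.prod_pos fun j _ => hg _ (hxs j)) (hf hx hxs)).trans_eq
    (det_mul_row (fun j => g (x j)) _).symm

theorem det_pos_of_strictAnti [LT R] (hf : IsPosChebyshevSystemOn (fun i => f i.rev) s)
    {x : Fin n → α} (hx : StrictAnti x) (hxs : ∀ j, x j ∈ s) :
    0 < (of fun i j => f i (x j)).det := by
  rw [← det_submatrix_equiv_self Fin.revPerm]
  exact hf (hx.comp Fin.rev_strictAnti) fun j => hxs j.rev

end Algebra

section Derivative

variable {n : ℕ} {f f' : Fin n → ℝ → ℝ} {s : Set ℝ} [s.OrdConnected]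

theorem det_succ_sub_castSucc_pos (h : IsPosChebyshevSystemOn f' (interior s))
    (hf : ∀ i, ContinuousOn (f i) s) (hf' : ∀ i, ∀ u ∈ interior s, HasDerivAt (f i) (f' i u) u)
    {x : Fin (n + 1) → ℝ} (hx : StrictMono x) (hxs : ∀ j, x j ∈ s) :
    0 < (of fun i j : Fin n => f i (x j.succ) - f i (x j.castSucc)).det := by
  have Icc_subset (j : Fin n) : Icc (x j.castSucc) (x j.succ) ⊆ s :=
    OrdConnected.out' (hxs _) (hxs _)
  have Ioo_subset (j : Fin n) : Ioo (x j.castSucc) (x j.succ) ⊆ interior s :=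
    interior_maximal (Ioo_subset_Icc_self.trans (Icc_subset j)) isOpen_Ioo
  -- The columns in `J` are already differences; the others are still derivatives.
  let mixed (J : Finset (Fin n)) (t : Fin n → ℝ) : Matrix (Fin n) (Fin n) ℝ :=
    of fun i j => if j ∈ J then f i (x j.succ) - f i (x j.castSucc) else f' i (t j)
  have det_mixed_pos (J : Finset (Fin n)) (t : Fin n → ℝ)
      (ht : ∀ j, t j ∈ Ioo (x j.castSucc) (x j.succ)) : 0 < (mixed J t).det := by
    induction J using Finset.induction_on generalizing t with
    | empty =>
      have t_strictMono : StrictMono t := strictMono_of_forall_mem_Ioo hx.monotone ht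
      simpa [mixed] using h t_strictMono fun j => Ioo_subset j (ht j)
    | insert c J hc ih =>
      have hlt : x c.castSucc < x c.succ := hx Fin.castSucc_lt_succ
      obtain ⟨u, hu, slope⟩ := exists_det_updateCol_eq_slope (mixed J t) c hlt
        (fun i => (hf i).mono (Icc_subset c)) fun i v hv => hf' i v (Ioo_subset c hv)
      have derivative_col : (mixed J t).updateCol c (fun i => f' i u) =
          mixed J (Function.update t c u) := by
        ext i j
        obtain rfl | hj := eq_or_ne j c
        · simp [mixed, hc]
        · simp [mixed, hj]
      have difference_col : (mixed J t).updateCol c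
          (fun i => f i (x c.succ) - f i (x c.castSucc)) = mixed (insert c J) t := by
        ext i j
        obtain rfl | hj := eq_or_ne j c
        · simp [mixed]
        · simp [mixed, hj]
      have det_pos := ih (Function.update t c u)
        (Function.forall_update_iff t _ |>.2 ⟨hu, fun j _ => ht j⟩)
      rw [← derivative_col, slope, difference_col] at det_pos
      exact (div_pos_iff_of_pos_right (sub_pos.2 hlt)).1 det_pos
  have midpoint_mem (j : Fin n) :
      (x j.castSucc + x j.succ) / 2 ∈ Ioo (x j.castSucc) (x j.succ) :=
    have hlt : x j.castSucc < x j.succ := hx Fin.castSucc_lt_succ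
    ⟨left_lt_add_div_two.2 hlt, add_div_two_lt_right.2 hlt⟩
  simpa [mixed] using det_mixed_pos Finset.univ _ midpoint_mem

theorem det_succ_sub_zero_pos (h : IsPosChebyshevSystemOn f' (interior s))
    (hf : ∀ i, ContinuousOn (f i) s) (hf' : ∀ i, ∀ u ∈ interior s, HasDerivAt (f i) (f' i u) u)
    {x : Fin (n + 1) → ℝ} (hx : StrictMono x) (hxs : ∀ j, x j ∈ s) :
    0 < (of fun i j : Fin n => f i (x j.succ) - f i (x 0)).det :=
  (h.det_succ_sub_castSucc_pos hf hf' hx hxs).trans_eq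
    (det_succ_sub_castSucc_eq_det_succ_sub_zero (of fun i j => f i (x j)))

theorem sub_const_of_hasDerivAt (h : IsPosChebyshevSystemOn f' (interior s))
    (hf : ∀ i, ContinuousOn (f i) s) (hf' : ∀ i, ∀ u ∈ interior s, HasDerivAt (f i) (f' i u) u)
    {u₀ : ℝ} (hu₀ : u₀ ∈ s) :
    IsPosChebyshevSystemOn (fun i u => f i u - f i u₀) (s ∩ Ioi u₀) := by
  intro x hx hxs
  simpa using h.det_succ_sub_zero_pos hf hf' (Fin.strictMono_cons.2 ⟨fun j => (hxs j).2, hx⟩)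
    (Fin.forall_fin_succ.2 ⟨hu₀, fun j => (hxs j).1⟩)

theorem cons_one_of_hasDerivAt (h : IsPosChebyshevSystemOn f' (interior s))
    (hf : ∀ i, ContinuousOn (f i) s) (hf' : ∀ i, ∀ u ∈ interior s, HasDerivAt (f i) (f' i u) u) :
    IsPosChebyshevSystemOn (Fin.cons 1 f : Fin (n + 1) → ℝ → ℝ) s := by
  intro x hx hxs
  rw [det_eq_det_succ_sub_zero_of_row_zero_eq_one fun _ => rfl]
  exact h.det_succ_sub_zero_pos hf hf' hx hxs

end Derivative

end IsPosChebyshevSystemOn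

section Exponentials

open Real

theorem hasDerivAt_exp_const_mul (a u : ℝ) :
    HasDerivAt (fun u => exp (a * u)) (a * exp (a * u)) u := by
  simpa [mul_comm] using ((hasDerivAt_id u).const_mul a).exp

variable {n : ℕ} {a : Fin n → ℝ}

theorem isPosChebyshevSystemOn_exp (ha : StrictMono a) :
    IsPosChebyshevSystemOn (fun i u => exp (a i * u)) univ := by
  induction n with
  | zero => intro x _ _; simp
  | succ n ih =>
    have diff_strictMono : StrictMono fun i : Fin n => a i.succ - a 0 := fun i j hij =>
      sub_lt_sub_right (ha (Fin.succ_lt_succ_iff.2 hij)) _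
    have derivatives : IsPosChebyshevSystemOn
        (fun (i : Fin n) u => (a i.succ - a 0) * exp ((a i.succ - a 0) * u)) (interior univ) := by
      simpa only [interior_univ] using
        (ih diff_strictMono).const_mul fun i => sub_pos.2 (ha i.succ_pos)
    have quotients := derivatives.cons_one_of_hasDerivAt (fun i => by fun_prop)
      fun i u _ => hasDerivAt_exp_const_mul (a i.succ - a 0) u
    have factorization : (fun i u => exp (a i * u)) = fun i u => exp (a 0 * u) *
        (Fin.cons 1 fun i u => exp ((a i.succ - a 0) * u) : Fin (n + 1) → ℝ → ℝ) i u := by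
      ext i u
      cases i using Fin.cases with
      | zero => simp
      | succ i => simp [← exp_add, ← add_mul]
    rw [factorization]
    exact quotients.weight_mul fun u _ => exp_pos _

theorem isPosChebyshevSystemOn_exp_sub_one (ha : StrictMono a) (ha₀ : ∀ i, 0 < a i) :
    IsPosChebyshevSystemOn (fun i u => exp (a i * u) - 1) (Ioi 0) := by
  have derivatives : IsPosChebyshevSystemOn (fun i u => a i * exp (a i * u)) (interior univ) := by
    simpa only [interior_univ] using (isPosChebyshevSystemOn_exp ha).const_mul ha₀
  simpa using derivatives.sub_const_of_hasDerivAt (fun i => by fun_prop)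
    (fun i u _ => hasDerivAt_exp_const_mul (a i) u) (mem_univ 0)

theorem isPosChebyshevSystemOn_rpow_sub_one {b : Fin n → ℝ} (hb : StrictMono b)
    (hb₁ : ∀ i, 1 < b i) : IsPosChebyshevSystemOn (fun i (u : ℝ) => b i ^ u - 1) (Ioi 0) := by
  have b_pos (i : Fin n) : 0 < b i := one_pos.trans (hb₁ i)
  simpa only [rpow_def_of_pos (b_pos _)] using isPosChebyshevSystemOn_exp_sub_one
    (fun i j hij => log_lt_log (b_pos i) (hb hij)) fun i => log_pos (hb₁ i)

end Exponentials

/-- The weight function `w₅(λ,x) = ((1+λ)^x − 1)/(λx)` is strictly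
totally positive of order infinity on `(0,∞)²` (with `(1+λ)^x` the real power
`exp(x log(1+λ))`). -/
theorem stmt_17 :
    ∀ r : ℕ, 1 ≤ r → ∀ lam x : Fin r → ℝ,
      (∀ i : Fin r, 0 < lam i) → (∀ j : Fin r, 0 < x j) →
      (∀ i j : Fin r, i < j → lam j < lam i) →
      (∀ i j : Fin r, i < j → x j < x i) →
      0 < Matrix.det (Matrix.of fun i j : Fin r =>
        ((1 + lam i) ^ (x j) - 1) / (lam i * x j)) := by
  intro r _ lam x lam_pos x_pos lam_anti x_anti
  have numerators : IsPosChebyshevSystemOn (fun i (u : ℝ) => (1 + lam i.rev) ^ u - 1) (Ioi 0) :=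
    isPosChebyshevSystemOn_rpow_sub_one
      (fun i j hij => add_lt_add_right (lam_anti _ _ (Fin.rev_lt_rev.2 hij)) 1)
      fun i => lt_add_of_pos_right 1 (lam_pos i.rev)
  have weights : IsPosChebyshevSystemOn
      (fun i (u : ℝ) => ((1 + lam i.rev) ^ u - 1) / (lam i.rev * u)) (Ioi 0) := by
    simpa only [div_eq_mul_inv, mul_inv, mul_comm, mul_left_comm, mul_assoc] using
      (numerators.const_mul fun i => inv_pos.2 (lam_pos i.rev)).weight_mul (g := fun u => u⁻¹)
        fun u hu => inv_pos.2 hu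
  exact weights.det_pos_of_strictAnti (f := fun i u => ((1 + lam i) ^ u - 1) / (lam i * u))
    (fun i j => x_anti i j) x_pos
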